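/- Let p/q be an irreducible fraction with 0 < p/q < 1 and q ≥ 2. Then the number of entries equal to 5 in the reduced degree sequence of G_{p/q} is: 3p − q if 1/3 < p/q < 1/2; 2q − 3p if 1/2 < p/q < 2/3; 1 if p/q = 1/3 or p/q = 2/3; and 0 in all remaining cases (in particular for p/q = 1/2 and for p/q outside [1/3, 2/3]). -/

import Mathlib

/-- Symbols for paths in the Farey binary tree. -/
inductive LR
  | L
  | R
deriving DecidableEq

/-- One step in the Farey binary tree: update the current pair of fractions
(represented as pairs (numerator, denominator) of naturals). -/
def fareyStep : ((ℕ × ℕ) × (ℕ × ℕ)) → LR → ((ℕ × ℕ) × (ℕ × ℕ))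
  | ((a, b), (c, d)), LR.L => ((a, b), (a + c, b + d))
  | ((a, b), (c, d)), LR.R => ((a + c, b + d), (c, d))

/-- The final pair of fractions of a word: after reading the first symbol `L`
the current pair is (0/1, 1/1); the remaining symbols update it. -/
def finalPair (w : List LR) : (ℕ × ℕ) × (ℕ × ℕ) :=
  w.tail.foldl fareyStep ((0, 1), (1, 1))

/-- The value ⟨w⟩ of a word: the mediant of its final pair, as (numerator, denominator). -/
def value (w : List LR) : ℕ × ℕ :=
  ((finalPair w).1.1 + (finalPair w).2.1, (finalPair w).1.2 + (finalPair w).2.2)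

/-- A word over {L,R} is a Farey word when its first symbol is `L`. -/
def IsFareyWord (w : List LR) : Prop := w.head? = some LR.L

/-- Concatenation of degree sequences:
[a₁,…,a_s] ⊕ [b₁,…,b_t] = [a₁+1, a₂, …, a_{s−1}, a_s+b₁, b₂, …, b_{t−1}, b_t+1]. -/
def oplus (A B : List ℕ) : List ℕ :=
  (A.dropLast.modifyHead (· + 1)) ++ [A.getLastD 0 + B.headD 0] ++ B.tail.dropLast
    ++ [B.getLastD 0 + 1]

/-- Update of the pair (D(left ancestor), D(right ancestor)) of unreduced degree
sequences along one symbol. -/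
def degStep : (List ℕ × List ℕ) → LR → (List ℕ × List ℕ)
  | (A, B), LR.L => (A, oplus A B)
  | (A, B), LR.R => (oplus A B, B)

/-- The pair (D(a/b), D(c/d)) of unreduced degree sequences of the final pair of a word;
0/1 and 1/1 are both assigned the list [1,1]. -/
def degPair (w : List LR) : List ℕ × List ℕ :=
  w.tail.foldl degStep ([1, 1], [1, 1])

/-- The unreduced degree sequence D(⟨w⟩) = D(a/b) ⊕ D(c/d) of the value of a word. -/
def Dseq (w : List LR) : List ℕ :=
  oplus (degPair w).1 (degPair w).2

/-- Reduction: [k₁,…,k_{q+1}] becomes [k₂,…,k_q, k₁+k_{q+1}]; the last entry is the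
boundary degree and the remaining ones are the inner degrees. -/
def reduce (D : List ℕ) : List ℕ :=
  D.tail.dropLast ++ [D.headD 0 + D.getLastD 0]

/-- The reduced degree sequence of the Haros graph G_{⟨w⟩}. -/
def degSeq (w : List LR) : List ℕ := reduce (Dseq w)

/-- Degree-distribution entropy S of the Haros graph G_{⟨w⟩}:
S = −Σ_k P(k)·ln P(k), summed over the degree values occurring in the reduced
degree sequence, where P(k) = m(k)/q. -/
noncomputable def Sent (w : List LR) : ℝ :=
  -∑ k ∈ (degSeq w).toFinset,
    (((degSeq w).count k : ℝ) / ((value w).2 : ℝ)) *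
      Real.log (((degSeq w).count k : ℝ) / ((value w).2 : ℝ))

/-- Reduced entropy H of the Haros graph G_{⟨w⟩} (with the convention 0·ln 0 = 0,
automatic since Real.log 0 = 0). -/
noncomputable def Hent (w : List LR) : ℝ :=
  let x : ℝ := ((value w).1 : ℝ) / ((value w).2 : ℝ)
  if x ≤ 1 / 2 then
    Sent w + 2 * x * Real.log x + (1 - 2 * x) * Real.log (1 - 2 * x)
  else
    Sent w + 2 * (1 - x) * Real.log (1 - x) + (2 * x - 1) * Real.log (2 * x - 1)

/-!
Below a pair of neighbours `(x, y)` of the Farey tree every fraction is a combination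
`i • x + j • y` with `i, j > 0`. An entry `k` of a degree sequence can only be created where two
sequences are glued, or as a boundary degree. Gluing makes the end entries grow. Once they are so
large that no new `k` appears below `(x, y)`, the number of entries `k` is additive: it equals `i`
times its value at `x` plus `j` times its value at `y`.

For `k = 5`, apart from the boundary degree of `1/3` itself, new entries arise only next to `1/2`,
whose boundary degree is `4`: each gluing to `D(1/2)` along the edge of the interval `(1/3, 1/2)`
creates one entry `4 + 1`. So `1/2` behaves as if it carried one entry `5`, and
`i • (1/3) + j • (1/2) = (i + j) / (3 i + 2 j)` has `j = 3 (i + j) - (3 i + 2 j)` of them. In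
`(0, 1/3)` none are created, and `x ↦ 1 - x` reverses degree sequences, which settles the fractions
above `1/2`.
-/

section FareyTree

/-- The coefficients `(i, j)` of the fraction `i • x + j • y` reached from a pair of fractions
`(x, y)` by reading a path and then taking the mediant. -/
def weights : List LR → ℕ × ℕ
  | [] => (1, 1)
  | LR.L :: u => ((weights u).1 + (weights u).2, (weights u).2)
  | LR.R :: u => ((weights u).1, (weights u).1 + (weights u).2)

theorem weights_fst_pos (u : List LR) : 0 < (weights u).1 := by
  induction u using weights.induct <;> simp only [weights] <;> omega

theorem weights_snd_pos (u : List LR) : 0 < (weights u).2 := by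
  induction u using weights.induct <;> simp only [weights] <;> omega

theorem fst_add_snd_foldl_fareyStep (u : List LR) (x y : ℕ × ℕ) :
    (u.foldl fareyStep (x, y)).1 + (u.foldl fareyStep (x, y)).2 =
      (weights u).1 • x + (weights u).2 • y := by
  induction u generalizing x y with
  | nil => simp only [List.foldl_nil, weights, one_smul]
  | cons s u ih =>
    cases s with
    | L =>
      calc _ = (weights u).1 • x + (weights u).2 • (x + y) := ih x (x + y)
        _ = _ := by simp only [weights]; module
    | R =>
      calc _ = (weights u).1 • (x + y) + (weights u).2 • y := ih (x + y) y
        _ = _ := by simp only [weights]; module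

theorem value_cons (s : LR) (u : List LR) :
    value (s :: u) = ((weights u).2, (weights u).1 + (weights u).2) :=
  calc value (s :: u) = (weights u).1 • (0, 1) + (weights u).2 • (1, 1) :=
        fst_add_snd_foldl_fareyStep u (0, 1) (1, 1)
    _ = _ := by simp

/-- Exchange of left and right turns, the action of `x ↦ 1 - x` on symbols of Farey paths. -/
def LR.mirror : LR → LR
  | LR.L => LR.R
  | LR.R => LR.L

theorem weights_map_mirror (u : List LR) : weights (u.map LR.mirror) = (weights u).swap := by
  induction u using weights.induct <;> simp_all [weights, LR.mirror, add_comm]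

end FareyTree

section DegreeSequences

variable {A B D : List ℕ}

/-- The boundary degree of the Haros graph with unreduced degree sequence `D`. -/
def boundaryDegree (D : List ℕ) : ℕ := D.headD 0 + D.getLastD 0

/-- The number of inner degrees equal to `k` of the Haros graph with unreduced degree sequence
`D`. -/
def innerCount (k : ℕ) (D : List ℕ) : ℕ := D.tail.dropLast.count k

theorem count_reduce (k : ℕ) (D : List ℕ) :
    (reduce D).count k = innerCount k D + if boundaryDegree D = k then 1 else 0 := by
  simp [reduce, innerCount, boundaryDegree, List.count_singleton]

theorem count_reduce_of_lt {k : ℕ} (hD : k < boundaryDegree D) :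
    (reduce D).count k = innerCount k D := by
  rw [count_reduce, if_neg hD.ne', add_zero]

theorem exists_eq_cons_concat (hD : 2 ≤ D.length) : ∃ h I l, D = h :: (I ++ [l]) := by
  obtain ⟨h, T, rfl⟩ := List.exists_cons_of_length_pos (by omega : 0 < D.length)
  have hT : T ≠ [] := by rintro rfl; simp at hD
  exact ⟨h, T.dropLast, T.getLast hT, by rw [List.dropLast_concat_getLast]⟩

theorem oplus_cons_concat (h l h' l' : ℕ) (I J : List ℕ) :
    oplus (h :: (I ++ [l])) (h' :: (J ++ [l'])) =
      (h + 1) :: ((I ++ (l + h') :: J) ++ [l' + 1]) := by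
  simp [oplus, List.getLastD_cons, List.getLastD_concat, -List.getLastD_eq_getLast?,
    List.dropLast_cons_of_ne_nil]

theorem two_le_length_oplus (A B : List ℕ) : 2 ≤ (oplus A B).length := by
  simp only [oplus, List.length_append, List.length_singleton]
  omega

theorem getLastD_oplus (A B : List ℕ) : (oplus A B).getLastD 0 = B.getLastD 0 + 1 := by
  simp [oplus, List.getLastD_concat, -List.getLastD_eq_getLast?, -List.append_assoc]

theorem headD_oplus (hA : 2 ≤ A.length) (B : List ℕ) :
    (oplus A B).headD 0 = A.headD 0 + 1 := by
  obtain ⟨h, I, l, rfl⟩ := exists_eq_cons_concat hA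
  simp [oplus, List.dropLast_cons_of_ne_nil]

theorem boundaryDegree_oplus (hA : 2 ≤ A.length) (B : List ℕ) :
    boundaryDegree (oplus A B) = A.headD 0 + B.getLastD 0 + 2 := by
  rw [boundaryDegree, headD_oplus hA, getLastD_oplus]
  ring

theorem innerCount_oplus (k : ℕ) (hA : 2 ≤ A.length) (hB : 2 ≤ B.length) :
    innerCount k (oplus A B) =
      innerCount k A + innerCount k B + if A.getLastD 0 + B.headD 0 = k then 1 else 0 := by
  obtain ⟨h, I, l, rfl⟩ := exists_eq_cons_concat hA
  obtain ⟨h', J, l', rfl⟩ := exists_eq_cons_concat hB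
  simp only [oplus_cons_concat, innerCount, List.tail_cons, List.dropLast_concat,
    List.getLastD_cons, List.getLastD_concat, List.headD_cons, List.count_append, List.count_cons,
    beq_iff_eq]
  ring

theorem innerCount_oplus_of_ne {k : ℕ} (hA : 2 ≤ A.length) (hB : 2 ≤ B.length)
    (hk : A.getLastD 0 + B.headD 0 ≠ k) :
    innerCount k (oplus A B) = innerCount k A + innerCount k B := by
  rw [innerCount_oplus k hA hB, if_neg hk, add_zero]

theorem reverse_oplus (hA : 2 ≤ A.length) (hB : 2 ≤ B.length) :
    (oplus A B).reverse = oplus B.reverse A.reverse := by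
  obtain ⟨h, I, l, rfl⟩ := exists_eq_cons_concat hA
  obtain ⟨h', J, l', rfl⟩ := exists_eq_cons_concat hB
  simp [oplus_cons_concat, add_comm]

theorem count_reduce_reverse (k : ℕ) (hD : 2 ≤ D.length) :
    (reduce D.reverse).count k = (reduce D).count k := by
  obtain ⟨h, I, l, rfl⟩ := exists_eq_cons_concat hD
  simp [reduce, List.getLastD_cons, List.getLastD_concat, -List.getLastD_eq_getLast?, add_comm]

/-- The unreduced degree sequence reached from a pair of degree sequences `(A, B)` by reading a
path. -/
def descendant (A B : List ℕ) (u : List LR) : List ℕ :=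
  oplus (u.foldl degStep (A, B)).1 (u.foldl degStep (A, B)).2

theorem descendant_nil (A B : List ℕ) : descendant A B [] = oplus A B := rfl

theorem descendant_cons_L (A B : List ℕ) (u : List LR) :
    descendant A B (LR.L :: u) = descendant A (oplus A B) u := rfl

theorem descendant_cons_R (A B : List ℕ) (u : List LR) :
    descendant A B (LR.R :: u) = descendant (oplus A B) B u := rfl

theorem degSeq_cons (s : LR) (u : List LR) :
    degSeq (s :: u) = reduce (descendant [1, 1] [1, 1] u) := rfl

theorem two_le_length_descendant (A B : List ℕ) (u : List LR) : 2 ≤ (descendant A B u).length :=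
  two_le_length_oplus _ _

theorem reverse_descendant (hA : 2 ≤ A.length) (hB : 2 ≤ B.length) (u : List LR) :
    (descendant A B u).reverse = descendant B.reverse A.reverse (u.map LR.mirror) := by
  induction u generalizing A B with
  | nil => exact reverse_oplus hA hB
  | cons s u ih =>
    cases s with
    | L => rw [descendant_cons_L, ih hA (two_le_length_oplus A B), reverse_oplus hA hB]; rfl
    | R => rw [descendant_cons_R, ih (two_le_length_oplus A B) hB, reverse_oplus hA hB]; rfl

theorem count_degSeq_mirror (k : ℕ) (s : LR) (u : List LR) :
    (degSeq (s :: u.map LR.mirror)).count k = (degSeq (s :: u)).count k := by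
  have hrev : (descendant [1, 1] [1, 1] u).reverse = descendant [1, 1] [1, 1] (u.map LR.mirror) :=
    reverse_descendant le_rfl le_rfl u
  rw [degSeq_cons, degSeq_cons, ← hrev, count_reduce_reverse k (two_le_length_descendant _ _ _)]

end DegreeSequences

section CountBelow

variable {k : ℕ} {A B : List ℕ}

/-- A pair of degree sequences below which neither a gluing nor a boundary produces the degree `k`
any more. The boundary degrees of `A` and `B` may equal `k`: they do not occur below the pair, where
only larger junctions arise from them. -/
structure IsSaturated (k : ℕ) (A B : List ℕ) : Prop where
  two_le_length_left : 2 ≤ A.length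
  two_le_length_right : 2 ≤ B.length
  le_boundaryDegree_left : k ≤ boundaryDegree A
  le_boundaryDegree_right : k ≤ boundaryDegree B
  lt_boundaryDegree_oplus : k < boundaryDegree (oplus A B)
  lt_junction : k < A.getLastD 0 + B.headD 0

namespace IsSaturated

theorem innerCount_oplus (h : IsSaturated k A B) :
    innerCount k (oplus A B) = innerCount k A + innerCount k B :=
  innerCount_oplus_of_ne h.two_le_length_left h.two_le_length_right h.lt_junction.ne'

theorem oplus_right (h : IsSaturated k A B) : IsSaturated k A (oplus A B) := by
  have hA := h.two_le_length_left
  have hkA := h.le_boundaryDegree_left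
  have hkAB := h.lt_boundaryDegree_oplus
  refine ⟨hA, two_le_length_oplus A B, hkA, hkAB.le, ?_, ?_⟩
  · rw [boundaryDegree_oplus hA] at hkAB
    rw [boundaryDegree_oplus hA, getLastD_oplus]
    omega
  · unfold boundaryDegree at hkA
    rw [headD_oplus hA]
    omega

theorem oplus_left (h : IsSaturated k A B) : IsSaturated k (oplus A B) B := by
  have hA := h.two_le_length_left
  have hkB := h.le_boundaryDegree_right
  have hkAB := h.lt_boundaryDegree_oplus
  refine ⟨two_le_length_oplus A B, h.two_le_length_right, hkAB.le, hkB, ?_, ?_⟩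
  · rw [boundaryDegree_oplus hA] at hkAB
    rw [boundaryDegree_oplus (two_le_length_oplus A B), headD_oplus hA]
    omega
  · unfold boundaryDegree at hkB
    rw [getLastD_oplus]
    omega

theorem count_reduce_descendant (h : IsSaturated k A B) (u : List LR) :
    (reduce (descendant A B u)).count k =
      (weights u).1 * innerCount k A + (weights u).2 * innerCount k B := by
  induction u generalizing A B with
  | nil =>
    simp only [descendant_nil, count_reduce_of_lt h.lt_boundaryDegree_oplus, h.innerCount_oplus,
      weights, one_mul]
  | cons s u ih =>
    cases s with
    | L =>
      rw [descendant_cons_L, ih h.oplus_right, h.innerCount_oplus]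
      simp only [weights]
      ring
    | R =>
      rw [descendant_cons_R, ih h.oplus_left, h.innerCount_oplus]
      simp only [weights]
      ring

end IsSaturated

theorem IsSaturated.of_headD_eq (hA : 2 ≤ A.length) (hB : 2 ≤ B.length)
    (hhead : B.headD 0 = A.headD 0 + 1) (hkB : k ≤ boundaryDegree B) :
    IsSaturated k (oplus A B) B := by
  unfold boundaryDegree at hkB
  refine ⟨two_le_length_oplus A B, hB, ?_, hkB, ?_, ?_⟩
  · rw [boundaryDegree_oplus hA]
    omega
  · rw [boundaryDegree_oplus (two_le_length_oplus A B), headD_oplus hA]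
    omega
  · rw [getLastD_oplus]
    omega

-- The equation `hhead` holds whenever `B` arises by gluing some sequence to the right of `A`, so it
-- persists as long as the path turns left; the first right turn saturates the pair.
theorem count_reduce_descendant_of_headD_eq (hA : 2 ≤ A.length) (hB : 2 ≤ B.length)
    (hhead : B.headD 0 = A.headD 0 + 1) (hkA : boundaryDegree A + 1 < k)
    (hkB : k ≤ boundaryDegree B) (u : List LR) :
    (reduce (descendant A B u)).count k =
      (weights u).1 * innerCount k A + (weights u).2 * innerCount k B := by
  induction u generalizing B with
  | nil =>
    rw [descendant_nil, count_reduce_of_lt, innerCount_oplus_of_ne hA hB]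
    · simp only [weights, one_mul]
    · unfold boundaryDegree at hkA
      omega
    · rw [boundaryDegree_oplus hA]
      unfold boundaryDegree at hkB
      omega
  | cons s u ih =>
    have hinner : innerCount k (oplus A B) = innerCount k A + innerCount k B :=
      innerCount_oplus_of_ne hA hB (by unfold boundaryDegree at hkA; omega)
    cases s with
    | L =>
      have hkAB : k ≤ boundaryDegree (oplus A B) := by
        rw [boundaryDegree_oplus hA]
        unfold boundaryDegree at hkB
        omega
      rw [descendant_cons_L, ih (two_le_length_oplus A B) (headD_oplus hA B) hkAB, hinner]
      simp only [weights]
      ring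
    | R =>
      rw [descendant_cons_R, (IsSaturated.of_headD_eq hA hB hhead hkB).count_reduce_descendant,
        hinner]
      simp only [weights]
      ring

theorem IsSaturated.of_getLastD_eq (hA : 2 ≤ A.length)
    (hlast : A.getLastD 0 = B.getLastD 0 + 1) (hhead : B.headD 0 ≤ A.headD 0) :
    IsSaturated (boundaryDegree B + 1) A (oplus A B) := by
  refine ⟨hA, two_le_length_oplus A B, ?_, ?_, ?_, ?_⟩
  · unfold boundaryDegree
    omega
  · rw [boundaryDegree_oplus hA, boundaryDegree]
    omega
  · rw [boundaryDegree_oplus hA, getLastD_oplus, boundaryDegree]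
    omega
  · rw [headD_oplus hA, boundaryDegree]
    omega

-- Every gluing to `B` along the edge creates an entry `boundaryDegree B + 1`, which makes `B` count
-- for one entry more than it has; the first left turn saturates the pair.
theorem count_reduce_descendant_of_getLastD_eq (hA : 2 ≤ A.length) (hB : 2 ≤ B.length)
    (hlast : A.getLastD 0 = B.getLastD 0 + 1) (hhead : B.headD 0 ≤ A.headD 0) (u : List LR) :
    (reduce (descendant A B u)).count (boundaryDegree B + 1) =
      (weights u).1 * innerCount (boundaryDegree B + 1) A +
        (weights u).2 * (innerCount (boundaryDegree B + 1) B + 1) := by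
  have hinner {A : List ℕ} (hA : 2 ≤ A.length) (hlast : A.getLastD 0 = B.getLastD 0 + 1) :
      innerCount (boundaryDegree B + 1) (oplus A B) =
        innerCount (boundaryDegree B + 1) A + innerCount (boundaryDegree B + 1) B + 1 := by
    rw [innerCount_oplus _ hA hB, if_pos (by unfold boundaryDegree; omega)]
  induction u generalizing A with
  | nil =>
    rw [descendant_nil, count_reduce_of_lt, hinner hA hlast]
    · simp only [weights]
      ring
    · rw [boundaryDegree_oplus hA, boundaryDegree]
      omega
  | cons s u ih =>
    cases s with
    | L =>
      rw [descendant_cons_L,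
        (IsSaturated.of_getLastD_eq hA hlast hhead).count_reduce_descendant, hinner hA hlast]
      simp only [weights]
      ring
    | R =>
      have hhead' : B.headD 0 ≤ (oplus A B).headD 0 := by
        rw [headD_oplus hA]
        omega
      rw [descendant_cons_R, ih (two_le_length_oplus A B) (getLastD_oplus A B) hhead',
        hinner hA hlast]
      simp only [weights]
      ring

end CountBelow

section DegreeFive

theorem count_five_degSeq_LLL (u : List LR) :
    (degSeq (LR.L :: LR.L :: LR.L :: u)).count 5 = 0 :=
  calc (degSeq (LR.L :: LR.L :: LR.L :: u)).count 5
    _ = (reduce (descendant [1, 1] [2, 3, 2, 3] u)).count 5 := rfl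
    _ = (weights u).1 * innerCount 5 [1, 1] + (weights u).2 * innerCount 5 [2, 3, 2, 3] := by
      apply count_reduce_descendant_of_headD_eq <;> decide
    _ = 0 := by simp [innerCount]

theorem count_five_degSeq_LLR (u : List LR) :
    (degSeq (LR.L :: LR.L :: LR.R :: u)).count 5 = (weights u).2 :=
  calc (degSeq (LR.L :: LR.L :: LR.R :: u)).count 5
    _ = (reduce (descendant [2, 3, 2, 3] [2, 2, 2] u)).count (boundaryDegree [2, 2, 2] + 1) := rfl
    _ = (weights u).1 * innerCount 5 [2, 3, 2, 3] +
        (weights u).2 * (innerCount 5 [2, 2, 2] + 1) := by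
      apply count_reduce_descendant_of_getLastD_eq <;> decide
    _ = (weights u).2 := by simp [innerCount]

theorem count_five_degSeq_LRR (u : List LR) :
    (degSeq (LR.L :: LR.R :: LR.R :: u)).count 5 = 0 := by
  rw [← count_degSeq_mirror]
  exact count_five_degSeq_LLL (u.map LR.mirror)

theorem count_five_degSeq_LRL (u : List LR) :
    (degSeq (LR.L :: LR.R :: LR.L :: u)).count 5 = (weights u).1 :=
  calc (degSeq (LR.L :: LR.R :: LR.L :: u)).count 5
    _ = (degSeq (LR.L :: LR.L :: LR.R :: u.map LR.mirror)).count 5 :=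
      (count_degSeq_mirror 5 LR.L (LR.R :: LR.L :: u)).symm
    _ = (weights (u.map LR.mirror)).2 := count_five_degSeq_LLR _
    _ = (weights u).1 := by rw [weights_map_mirror, Prod.snd_swap]

end DegreeFive

/-- the number of entries equal to 5 in the reduced degree sequence of
G_{p/q} is 3p − q if 1/3 < p/q < 1/2, is 2q − 3p if 1/2 < p/q < 2/3, is 1 if
p/q = 1/3 or p/q = 2/3, and is 0 in all remaining cases. -/
theorem statement2 (p q : ℕ) (hcop : Nat.Coprime p q) (hp : 0 < p) (hpq : p < q)
    (hq2 : 2 ≤ q) (w : List LR) (hw : IsFareyWord w) (hval : value w = (p, q)) :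
    (q < 3 * p → 2 * p < q → (degSeq w).count 5 = 3 * p - q) ∧
    (q < 2 * p → 3 * p < 2 * q → (degSeq w).count 5 = 2 * q - 3 * p) ∧
    (3 * p = q ∨ 3 * p = 2 * q → (degSeq w).count 5 = 1) ∧
    (¬(q < 3 * p ∧ 2 * p < q) → ¬(q < 2 * p ∧ 3 * p < 2 * q) →
      3 * p ≠ q → 3 * p ≠ 2 * q → (degSeq w).count 5 = 0) := by
  obtain ⟨u, rfl⟩ : ∃ u, w = LR.L :: u := ⟨w.tail, List.eq_cons_of_mem_head? hw⟩
  obtain ⟨rfl, rfl⟩ := Prod.mk.inj ((value_cons LR.L u).symm.trans hval)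
  rcases u with _ | ⟨s, _ | ⟨t, u⟩⟩
  · have half : (degSeq [LR.L]).count 5 = 0 := by decide
    simp [weights, half]
  · have thirds : (degSeq [LR.L, s]).count 5 = 1 := by cases s <;> decide
    cases s <;> simp [weights, thirds]
  · have hi := weights_fst_pos u
    have hj := weights_snd_pos u
    cases s <;> cases t <;> simp only [weights]
    · rw [count_five_degSeq_LLL]; omega
    · rw [count_five_degSeq_LLR]; omega
    · rw [count_five_degSeq_LRL]; omega
    · rw [count_five_degSeq_LRR]; omega
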